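/- Let φ_n = (B_n − B_n^n)/B_n be the proportion of minimal balanced collections on a set of n elements (excluding {N}) whose cardinality is strictly less than n. Then lim_{n→∞} φ_n = 0. (Equivalently, the proportion of facets of the polyhedron of balanced games containing games with a non-singleton core tends to 0 as n tends to infinity.) -/

import Mathlib

open Finset

/-- `lam` is a system of balancing weights for the collection `B`:
all weights are positive and `∑_{S∈B, S∋i} λ_S = 1` for every player `i`. -/
def IsBalancingWeights {n : ℕ} (B : Finset (Finset (Fin n)))
    (lam : Finset (Fin n) → ℝ) : Prop :=
  (∀ S ∈ B, 0 < lam S) ∧ ∀ i : Fin n, ∑ S ∈ B.filter (fun S => i ∈ S), lam S = 1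

/-- `B` is a balanced collection: a family of nonempty subsets of `N` admitting a
system of balancing weights. -/
def IsBalancedCollection {n : ℕ} (B : Finset (Finset (Fin n))) : Prop :=
  (∀ S ∈ B, S ≠ ∅) ∧ ∃ lam, IsBalancingWeights B lam

/-- `B` is a minimal balanced collection: balanced and no proper subfamily is balanced. -/
def IsMinimalBalancedCollection {n : ℕ} (B : Finset (Finset (Fin n))) : Prop :=
  IsBalancedCollection B ∧ ∀ B' ⊂ B, ¬ IsBalancedCollection B'

/-- `B_n`: the total number of minimal balanced collections on `N = {1,…,n}`,
excluding the collection `{N}`. -/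
noncomputable def Btot (n : ℕ) : ℕ :=
  Nat.card {B : Finset (Finset (Fin n)) //
    IsMinimalBalancedCollection B ∧ B ≠ {Finset.univ}}

/-- `B_n^n`: the number of minimal balanced collections on `N = {1,…,n}` (other
than `{N}`) consisting of exactly `n` subsets. -/
noncomputable def Bnn (n : ℕ) : ℕ :=
  Nat.card {B : Finset (Finset (Fin n)) //
    IsMinimalBalancedCollection B ∧ B ≠ {Finset.univ} ∧ B.card = n}

/-!
Modulo the constant vectors `1_{Sᶜ} = -1_S`, so a minimal balanced collection is a positive linear
dependence, unique up to scaling, among incidence vectors in a space of dimension `d = n - 1`; it is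
determined up to two choices by the sets it consists of, each taken up to complementation. There are
`2 ^ d` such classes, hence at most `2 (d + 1) 2 ^ (d * d) / d!` minimal balanced collections of
cardinality at most `d`.

Conversely, `d + 1` vectors in a space of dimension `d` whose only dependence has no zero
coefficient become a minimal balanced collection after complementing the sets with negative
coefficient. Such configurations are the columns of `0`-`1` matrices of size `d × (d + 1)` with
independent rows that admit a normal vector without zero coordinates. It is enough to have this
over `ZMod 3`, with a normal vector of `±1`: each of the `2 ^ d` normals, up to sign, has about
`2 ^ (d + 1) / 3` rows orthogonal to it, and choosing the rows greedily gives at least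
`2 ^ (d * d) (6 / 5) ^ d / 4096` matrices, each collection arising from at most `(d + 1)!` of them.
The ratio of the two bounds decays like `(d + 1) ^ 2 (5 / 6) ^ d`.
-/

open scoped Matrix Nat

section EvenCovering

variable {n : ℕ} {B B' : Finset (Finset (Fin n))} {w w' lam : Finset (Fin n) → ℝ}

/-- The weights `w`, of arbitrary sign, cover every player by the same total amount; equivalently
`∑ S ∈ B, w S • 1_S = 0` in the quotient of `ℝⁿ` by the constant vectors. -/
def CoversEvenly (B : Finset (Finset (Fin n))) (w : Finset (Fin n) → ℝ) : Prop :=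
  ∃ c, ∀ i, ∑ S ∈ B with i ∈ S, w S = c

lemma IsBalancingWeights.coversEvenly (h : IsBalancingWeights B lam) : CoversEvenly B lam :=
  ⟨1, h.2⟩

lemma CoversEvenly.sub_mul (h : CoversEvenly B w) (h' : CoversEvenly B w') (t : ℝ) :
    CoversEvenly B fun S => w S - t * w' S := by
  obtain ⟨c, hc⟩ := h
  obtain ⟨c', hc'⟩ := h'
  exact ⟨c - t * c', fun i => by rw [sum_sub_distrib, ← mul_sum, hc, hc']⟩

lemma coversEvenly_congr (h : ∀ S ∈ B, w S = w' S) : CoversEvenly B w ↔ CoversEvenly B w' := by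
  have hsum (i : Fin n) : ∑ S ∈ B with i ∈ S, w S = ∑ S ∈ B with i ∈ S, w' S :=
    sum_congr rfl fun S hS => h S (mem_of_mem_filter S hS)
  simp only [CoversEvenly, hsum]

lemma coversEvenly_iff_of_subset (hsub : B' ⊆ B) (h : ∀ S ∈ B, S ∉ B' → w S = 0) :
    CoversEvenly B' w ↔ CoversEvenly B w := by
  have hsum (i : Fin n) : ∑ S ∈ B' with i ∈ S, w S = ∑ S ∈ B with i ∈ S, w S :=
    sum_subset (filter_subset_filter _ hsub) fun S hS hS' => by
      simp only [mem_filter, not_and] at hS hS'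
      exact h S hS.1 fun hSB' => hS' hSB' hS.2
  simp only [CoversEvenly, hsum]

lemma isBalancedCollection_of_coversEvenly (hB : B.Nonempty) (hne : ∀ S ∈ B, S ≠ ∅)
    (hpos : ∀ S ∈ B, 0 < lam S) (hlam : CoversEvenly B lam) : IsBalancedCollection B := by
  obtain ⟨S, hS⟩ := hB
  obtain ⟨i, hi⟩ := nonempty_iff_ne_empty.2 (hne S hS)
  obtain ⟨c, hc⟩ := hlam
  have hc_pos : 0 < c := by
    rw [← hc i]
    exact sum_pos (fun T hT => hpos T (mem_of_mem_filter T hT)) ⟨S, mem_filter.2 ⟨hS, hi⟩⟩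
  exact ⟨hne, fun T => lam T / c, fun T hT => div_pos (hpos T hT) hc_pos,
    fun j => by rw [← sum_div, hc, div_self hc_pos.ne']⟩

lemma IsBalancedCollection.nonempty [NeZero n] (h : IsBalancedCollection B) : B.Nonempty := by
  obtain ⟨-, lam, -, hsum⟩ := h
  rw [nonempty_iff_ne_empty]
  rintro rfl
  simpa using hsum 0

lemma IsMinimalBalancedCollection.eq_of_subset (hB : IsMinimalBalancedCollection B)
    (hB' : IsBalancedCollection B') (h : B' ⊆ B) : B' = B := by
  by_contra hne
  exact absurd hB' (hB.2 B' (h.ssubset_of_ne hne))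

-- Subtract the largest multiple of `lam` that keeps the difference nonnegative: the sets on which
-- the difference is positive form a proper subfamily, balanced unless it is empty.
theorem IsMinimalBalancedCollection.exists_eq_mul (hB : IsMinimalBalancedCollection B)
    (hlam : IsBalancingWeights B lam) (hw : CoversEvenly B w) :
    ∃ t : ℝ, ∀ S ∈ B, w S = t * lam S := by
  rcases B.eq_empty_or_nonempty with rfl | hne
  · simp
  obtain ⟨S₀, hS₀, hmin⟩ := exists_min_image B (fun S => w S / lam S) hne
  set t := w S₀ / lam S₀ with ht
  set y : Finset (Fin n) → ℝ := fun S => w S - t * lam S with hy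
  have hy_nonneg : ∀ S ∈ B, 0 ≤ y S := fun S hS =>
    sub_nonneg.2 ((le_div_iff₀ (hlam.1 S hS)).1 (hmin S hS))
  have hy_zero : y S₀ = 0 := by
    rw [hy, ht]
    exact sub_eq_zero.2 (div_mul_cancel₀ _ (hlam.1 S₀ hS₀).ne').symm
  refine ⟨t, fun S hS => ?_⟩
  by_contra hwS
  refine hB.2 {T ∈ B | 0 < y T} (filter_ssubset.2 ⟨S₀, hS₀, hy_zero.not_gt⟩) ?_
  refine isBalancedCollection_of_coversEvenly (lam := y) ⟨S, ?_⟩ ?_ ?_ ?_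
  · exact mem_filter.2 ⟨hS, (hy_nonneg S hS).lt_of_ne (sub_ne_zero.2 hwS).symm⟩
  · exact fun T hT => hB.1.1 T (mem_of_mem_filter T hT)
  · exact fun T hT => (mem_filter.1 hT).2
  · refine (coversEvenly_iff_of_subset (filter_subset _ _) fun T hT hT' => ?_).2
      (hw.sub_mul hlam.coversEvenly t)
    simp only [mem_filter, not_and, not_lt] at hT'
    exact (hT' hT).antisymm (hy_nonneg T hT)

theorem isMinimalBalancedCollection_of_forall_exists_eq_mul (hB : B.Nonempty)
    (hne : ∀ S ∈ B, S ≠ ∅) (hpos : ∀ S ∈ B, 0 < lam S) (hlam : CoversEvenly B lam)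
    (huniq : ∀ w, CoversEvenly B w → ∃ t : ℝ, ∀ S ∈ B, w S = t * lam S) :
    IsMinimalBalancedCollection B := by
  refine ⟨isBalancedCollection_of_coversEvenly hB hne hpos hlam, fun B' hB' hbal => ?_⟩
  obtain ⟨T, hTB, hTB'⟩ := exists_of_ssubset hB'
  obtain ⟨i, -⟩ := nonempty_iff_ne_empty.2 (hne T hTB)
  obtain ⟨-, mu, hmu⟩ := hbal
  let w : Finset (Fin n) → ℝ := fun S => if S ∈ B' then mu S else 0
  have hwmu : ∀ S ∈ B', mu S = w S := fun S hS => (if_pos hS).symm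
  have hw : CoversEvenly B w :=
    (coversEvenly_iff_of_subset hB'.subset fun S _ hS => if_neg hS).1
      ((coversEvenly_congr hwmu).1 hmu.coversEvenly)
  obtain ⟨t, ht⟩ := huniq w hw
  have ht_zero : t = 0 := by
    have hT : t * lam T = 0 := by rw [← ht T hTB]; exact if_neg hTB'
    exact (mul_eq_zero.1 hT).resolve_right (hpos T hTB).ne'
  have hmu_zero : ∑ S ∈ B' with i ∈ S, mu S = 0 := sum_eq_zero fun S hS => by
    have hSB' := mem_of_mem_filter S hS
    rw [hwmu S hSB', ht S (hB'.subset hSB'), ht_zero, zero_mul]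
  exact one_ne_zero ((hmu.2 i).symm.trans hmu_zero)

end EvenCovering

section Incidence

/-- The incidence vector of the set `S`, with entries in `R`. -/
def incidence {ι : Type*} [DecidableEq ι] (R : Type*) [Zero R] [One R] (S : Finset ι) : ι → R :=
  fun i => if i ∈ S then 1 else 0

variable {ι : Type*} [DecidableEq ι]

lemma incidence_injective (R : Type*) [MulZeroOneClass R] [Nontrivial R] :
    Function.Injective (incidence R : Finset ι → ι → R) := by
  intro S T h
  ext i
  have hi := congrFun h i
  by_cases hS : i ∈ S <;> by_cases hT : i ∈ T <;> simp_all [incidence]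

end Incidence

theorem IsMinimalBalancedCollection.card_le {n : ℕ} {B : Finset (Finset (Fin n))}
    (hB : IsMinimalBalancedCollection B) : #B ≤ n := by
  obtain ⟨lam, hlam⟩ := hB.1.2
  have hindep : LinearIndepOn ℝ (incidence ℝ) (B : Set (Finset (Fin n))) := by
    refine linearIndepOn_finset_iff.2 fun w hw => ?_
    have hw_sum (i : Fin n) : ∑ S ∈ B with i ∈ S, w S = 0 := by
      simpa [incidence, sum_filter] using congrFun hw i
    obtain ⟨t, ht⟩ := hB.exists_eq_mul hlam ⟨0, hw_sum⟩
    intro S hS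
    obtain ⟨i, -⟩ := nonempty_iff_ne_empty.2 (hB.1.1 S hS)
    have ht_zero : t = 0 := calc
      t = ∑ T ∈ B with i ∈ T, t * lam T := by rw [← mul_sum, hlam.2, mul_one]
      _ = ∑ T ∈ B with i ∈ T, w T :=
        sum_congr rfl fun T hT => (ht T (mem_of_mem_filter T hT)).symm
      _ = 0 := hw_sum i
    rw [ht S hS, ht_zero, zero_mul]
  simpa using hindep.linearIndependent.fintype_card_le_finrank

section AwayFrom

variable {α : Type*} [Fintype α] [DecidableEq α] {p : α} {S T : Finset α}

/-- The one of `S` and `Sᶜ` that does not contain `p`. -/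
def awayFrom (p : α) (S : Finset α) : Finset α :=
  if p ∈ S then Sᶜ else S

lemma notMem_awayFrom (p : α) (S : Finset α) : p ∉ awayFrom p S := by
  grind [awayFrom, mem_compl]

lemma awayFrom_of_notMem (h : p ∉ S) : awayFrom p S = S :=
  if_neg h

lemma awayFrom_compl (p : α) (S : Finset α) : awayFrom p Sᶜ = awayFrom p S := by
  by_cases h : p ∈ S <;> simp [awayFrom, h]

lemma eq_or_eq_compl_of_awayFrom_eq (h : awayFrom p S = awayFrom p T) : S = T ∨ S = Tᶜ := by
  unfold awayFrom at h
  split_ifs at h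
  · exact .inl (compl_injective h)
  · exact .inr (compl_eq_comm.1 h).symm
  · exact .inr h
  · exact .inl h

lemma mem_or_compl_mem_of_awayFrom_mem_image {B : Finset (Finset α)}
    (h : awayFrom p T ∈ B.image (awayFrom p)) : T ∈ B ∨ Tᶜ ∈ B := by
  obtain ⟨S, hS, hST⟩ := mem_image.1 h
  rcases eq_or_eq_compl_of_awayFrom_eq hST with rfl | rfl
  · exact .inl hS
  · exact .inr hS

lemma mem_or_compl_mem_of_image_awayFrom_eq {B B' : Finset (Finset α)}
    (h : B.image (awayFrom p) = B'.image (awayFrom p)) (hT : T ∈ B') : T ∈ B ∨ Tᶜ ∈ B :=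
  mem_or_compl_mem_of_awayFrom_mem_image (h ▸ mem_image_of_mem _ hT)

end AwayFrom

section Fibers

variable {n : ℕ} {B B' : Finset (Finset (Fin n))}

lemma isBalancedCollection_pair {S : Finset (Fin n)} (hS : S ≠ ∅) (hS' : Sᶜ ≠ ∅) :
    IsBalancedCollection {S, Sᶜ} := by
  refine isBalancedCollection_of_coversEvenly (lam := fun _ => 1) ⟨S, by simp⟩
    (by simp [hS, hS']) (fun _ _ => one_pos) ⟨1, fun i => ?_⟩
  by_cases hi : i ∈ S <;> simp [filter_insert, filter_singleton, hi]

lemma IsMinimalBalancedCollection.eq_pair (hB : IsMinimalBalancedCollection B)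
    {S : Finset (Fin n)} (hS : S ∈ B) (hS' : Sᶜ ∈ B) : B = {S, Sᶜ} :=
  (hB.eq_of_subset (isBalancedCollection_pair (hB.1.1 S hS) (hB.1.1 _ hS')) (by
    simp [insert_subset_iff, hS, hS'])).symm

-- Modulo constant vectors `1_{Tᶜ} = -1_T`, so a set of `B'` outside `B` may be traded for its
-- complement with the opposite weight.
lemma CoversEvenly.transfer {mu : Finset (Fin n) → ℝ} (hmu : CoversEvenly B' mu)
    (h : ∀ T ∈ B', T ∈ B ∨ Tᶜ ∈ B) :
    CoversEvenly B fun S => (if S ∈ B' then mu S else 0) - if Sᶜ ∈ B' \ B then mu Sᶜ else 0 := by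
  obtain ⟨c, hc⟩ := hmu
  refine ⟨c - ∑ T ∈ B' \ B, mu T, fun i => ?_⟩
  have hkept : ∑ S ∈ B with i ∈ S, (if S ∈ B' then mu S else 0) =
      ∑ T ∈ B' ∩ B with i ∈ T, mu T := by
    rw [← sum_filter]
    exact sum_congr (by grind) fun _ _ => rfl
  have htraded : ∑ S ∈ B with i ∈ S, (if Sᶜ ∈ B' \ B then mu Sᶜ else 0) =
      ∑ T ∈ B' \ B with i ∉ T, mu T := by
    rw [← sum_filter]
    refine sum_nbij' compl compl (by simp +contextual) (fun T hT => ?_) (by simp) (by simp)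
      (by simp)
    grind [compl_compl, mem_compl]
  have hsplit : ∑ T ∈ B' with i ∈ T, mu T =
      ∑ T ∈ B' ∩ B with i ∈ T, mu T + ∑ T ∈ B' \ B with i ∈ T, mu T := by
    simp only [sum_filter, sum_inter_add_sum_sdiff]
  rw [sum_sub_distrib, hkept, htraded, ← hc i, hsplit,
    ← sum_filter_add_sum_filter_not (B' \ B) (i ∈ ·)]
  ring

lemma IsMinimalBalancedCollection.subset_of_noComplementaryPair
    (hB : IsMinimalBalancedCollection B) (hB' : IsBalancedCollection B')
    (hpair : ∀ T ∈ B', Tᶜ ∉ B') (h : ∀ T ∈ B', T ∈ B ∨ Tᶜ ∈ B)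
    {S : Finset (Fin n)} (hS : S ∈ B) (hS' : S ∈ B') : B' ⊆ B := by
  obtain ⟨lam, hlam⟩ := hB.1.2
  obtain ⟨-, mu, hmu⟩ := hB'
  obtain ⟨t, ht⟩ := hB.exists_eq_mul hlam (hmu.coversEvenly.transfer h)
  have ht_pos : 0 < t := by
    have hmuS : mu S = t * lam S := by simpa [hS', hpair S hS'] using ht S hS
    exact pos_of_mul_pos_left (hmuS ▸ hmu.1 S hS') (hlam.1 S hS).le
  intro T hT
  by_contra hTB
  have hTB' := (h T hT).resolve_left hTB
  have hmuT : -mu T = t * lam Tᶜ := by simpa [hT, hTB, hpair T hT] using ht _ hTB'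
  linarith [hmu.1 T hT, mul_pos ht_pos (hlam.1 _ hTB')]

theorem IsMinimalBalancedCollection.eq_of_image_awayFrom_eq (hB : IsMinimalBalancedCollection B)
    (hB' : IsMinimalBalancedCollection B') {p : Fin n}
    (h : B.image (awayFrom p) = B'.image (awayFrom p))
    {S : Finset (Fin n)} (hS : S ∈ B) (hS' : S ∈ B') : B = B' := by
  by_cases hpair : ∃ T ∈ B', Tᶜ ∈ B'
  · obtain ⟨T, hT, hT'⟩ := hpair
    have hB'_eq := hB'.eq_pair hT hT'
    refine hB'.eq_of_subset hB.1 fun U hU => ?_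
    have hU' := mem_or_compl_mem_of_image_awayFrom_eq h.symm hU
    simp only [hB'_eq, mem_insert, mem_singleton] at hU' ⊢
    grind [compl_compl]
  · push Not at hpair
    exact (hB.eq_of_subset hB'.1 (hB.subset_of_noComplementaryPair hB'.1 hpair
      (fun T hT => mem_or_compl_mem_of_image_awayFrom_eq h hT) hS hS')).symm

lemma card_filter_image_awayFrom_eq_le_two [NeZero n] {P : Finset (Finset (Finset (Fin n)))}
    (hP : ∀ B ∈ P, IsMinimalBalancedCollection B) (p : Fin n) (U : Finset (Finset (Fin n))) :
    #{B ∈ P | B.image (awayFrom p) = U} ≤ 2 := by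
  rcases {B ∈ P | B.image (awayFrom p) = U}.eq_empty_or_nonempty with hempty | ⟨B₀, hB₀⟩
  · simp [hempty]
  obtain ⟨hB₀P, hB₀U⟩ := mem_filter.1 hB₀
  obtain ⟨S, hS⟩ := (hP B₀ hB₀P).1.nonempty
  have hone (T : Finset (Fin n)) : #{B ∈ P | B.image (awayFrom p) = U ∧ T ∈ B} ≤ 1 := by
    refine card_le_one.2 fun B hB B' hB' => ?_
    simp only [mem_filter] at hB hB'
    exact (hP B hB.1).eq_of_image_awayFrom_eq (hP B' hB'.1) (hB.2.1.trans hB'.2.1.symm)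
      hB.2.2 hB'.2.2
  calc #{B ∈ P | B.image (awayFrom p) = U}
      ≤ #({B ∈ P | B.image (awayFrom p) = U ∧ S ∈ B} ∪
          {B ∈ P | B.image (awayFrom p) = U ∧ Sᶜ ∈ B}) := by
        refine card_le_card fun B hB => ?_
        obtain ⟨hBP, hBU⟩ := mem_filter.1 hB
        have := mem_or_compl_mem_of_image_awayFrom_eq (hBU.trans hB₀U.symm) hS
        simpa [hBP, hBU] using this
    _ ≤ 1 + 1 := (card_union_le _ _).trans (add_le_add (hone S) (hone Sᶜ))

end Fibers

section SmallCollections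

lemma choose_mul_factorial_le_pow {k d m : ℕ} (hk : k ≤ d) (hd : d ≤ m) :
    m.choose k * d ! ≤ m ^ d := calc
  m.choose k * d ! = m.descFactorial k * d.descFactorial (d - k) := by
    rw [Nat.descFactorial_eq_factorial_mul_choose, ← Nat.factorial_mul_descFactorial
      (Nat.sub_le d k), Nat.sub_sub_self hk]
    ring
  _ ≤ m ^ k * m ^ (d - k) := by
    gcongr
    · exact m.descFactorial_le_pow k
    · exact (d.descFactorial_le_pow _).trans (Nat.pow_le_pow_left hd _)
  _ = m ^ d := by rw [← pow_add, Nat.add_sub_cancel' hk]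

lemma card_filter_card_le_mul_factorial {α : Type*} {d : ℕ} {A : Finset α}
    (hd : d ≤ #A) : #{U ∈ A.powerset | #U ≤ d} * d ! ≤ (d + 1) * #A ^ d := by
  have hmaps : ∀ U ∈ ({U ∈ A.powerset | #U ≤ d} : Finset (Finset α)), #U ∈ range (d + 1) :=
    fun U hU => mem_range_succ_iff.2 (mem_filter.1 hU).2
  have hfiber : ∀ k ∈ range (d + 1),
      #{U ∈ ({U ∈ A.powerset | #U ≤ d} : Finset (Finset α)) | #U = k} * d ! ≤ #A ^ d := by
    intro k hk
    have hkd := mem_range_succ_iff.1 hk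
    refine le_trans ?_ (choose_mul_factorial_le_pow hkd hd)
    rw [← card_powersetCard, powersetCard_eq_filter, filter_filter]
    gcongr with U
    exact And.right
  rw [card_eq_sum_card_fiberwise hmaps, sum_mul]
  simpa using sum_le_card_nsmul _ _ _ hfiber

open scoped Classical in
theorem card_isMinimalBalancedCollection_card_le_mul_factorial (d : ℕ) :
    #{B : Finset (Finset (Fin (d + 1))) | IsMinimalBalancedCollection B ∧ #B ≤ d} * d ! ≤
      2 * ((d + 1) * 2 ^ (d * d)) := by
  set P : Finset (Finset (Finset (Fin (d + 1)))) :=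
    {B | IsMinimalBalancedCollection B ∧ #B ≤ d}
  let A : Finset (Finset (Fin (d + 1))) := (univ.erase 0).powerset
  have hA : #A = 2 ^ d := by simp [A]
  have hmaps : P.image (image (awayFrom 0)) ⊆ {U ∈ A.powerset | #U ≤ d} := by
    intro U hU
    obtain ⟨B, hB, rfl⟩ := mem_image.1 hU
    have hsub : B.image (awayFrom 0) ⊆ A := image_subset_iff.2 fun S _ =>
      mem_powerset.2 <| subset_erase.2 ⟨subset_univ _, notMem_awayFrom 0 S⟩
    exact mem_filter.2 ⟨mem_powerset.2 hsub, card_image_le.trans (mem_filter_univ B |>.1 hB).2⟩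
  have hfibers : #P ≤ 2 * #(P.image (image (awayFrom 0))) :=
    card_le_mul_card_image P 2 fun U _ =>
      card_filter_image_awayFrom_eq_le_two (fun B hB => (mem_filter_univ B |>.1 hB).1) 0 U
  have hd : d ≤ #A := hA ▸ Nat.lt_two_pow_self.le
  calc #P * d ! ≤ 2 * (#{U ∈ A.powerset | #U ≤ d} * d !) := by
        rw [← mul_assoc]
        exact Nat.mul_le_mul_right _ (hfibers.trans (Nat.mul_le_mul_left _ (card_le_card hmaps)))
    _ ≤ 2 * ((d + 1) * #A ^ d) := Nat.mul_le_mul_left _ (card_filter_card_le_mul_factorial hd)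
    _ = 2 * ((d + 1) * 2 ^ (d * d)) := by rw [hA, pow_mul]

end SmallCollections

section GenericRows

/-- The vector `y` is orthogonal to the incidence vectors of all the sets `ρ r`. -/
def IsNormalTo {κ ι K : Type*} [AddCommMonoid K] (ρ : κ → Finset ι) (y : ι → K) : Prop :=
  ∀ r, ∑ j ∈ ρ r, y j = 0

lemma IsNormalTo.sub {κ ι K : Type*} [AddCommGroup K] {ρ : κ → Finset ι} {y z : ι → K}
    (hy : IsNormalTo ρ y) (hz : IsNormalTo ρ z) : IsNormalTo ρ (y - z) := fun r => by
  simp [sum_sub_distrib, hy r, hz r]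

lemma IsNormalTo.smul {κ ι K : Type*} [Semiring K] {ρ : κ → Finset ι} {y : ι → K}
    (hy : IsNormalTo ρ y) (t : K) : IsNormalTo ρ (t • y) := fun r => by
  simp [← mul_sum, hy r]

variable {d : ℕ} {ρ : Fin d → Finset (Fin (d + 1))}

/-- The square matrix whose rows are the `i`-th unit vector and the incidence vectors of the
sets `ρ r`. -/
def borderedIncidence (K : Type*) [Zero K] [One K] (ρ : Fin d → Finset (Fin (d + 1)))
    (i : Fin (d + 1)) : Matrix (Fin (d + 1)) (Fin (d + 1)) K :=
  Matrix.of (Fin.cons (Pi.single i 1) fun r => incidence K (ρ r))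

/-- The rows `ρ` are generic over `K`: no bordered incidence matrix is singular. Over a field this
says that the incidence vectors are linearly independent and that the hyperplane they span has a
normal vector without zero coordinates; determinants let it pass from `ZMod p` to `ℝ`. -/
def IsGeneric (K : Type*) [CommRing K] (ρ : Fin d → Finset (Fin (d + 1))) : Prop :=
  ∀ i, (borderedIncidence K ρ i).det ≠ 0

lemma det_borderedIncidence (K : Type*) [CommRing K] (ρ : Fin d → Finset (Fin (d + 1)))
    (i : Fin (d + 1)) :
    (borderedIncidence K ρ i).det = ((borderedIncidence ℤ ρ i).det : K) := by
  rw [Int.cast_det]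
  congr 1
  ext a j
  refine Fin.cases ?_ (fun r => ?_) a
  · simp [borderedIncidence, Pi.single_apply]
  · simp [borderedIncidence, incidence]

theorem IsGeneric.of_charZero {R : Type*} [CommRing R] (h : IsGeneric R ρ) (K : Type*)
    [CommRing K] [CharZero K] : IsGeneric K ρ := by
  intro i hi
  rw [det_borderedIncidence, Int.cast_eq_zero] at hi
  exact h i (by rw [det_borderedIncidence, hi, Int.cast_zero])

lemma borderedIncidence_mulVec {K : Type*} [CommRing K] (ρ : Fin d → Finset (Fin (d + 1)))
    (i : Fin (d + 1)) (y : Fin (d + 1) → K) :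
    borderedIncidence K ρ i *ᵥ y = Fin.cons (y i) fun r => ∑ j ∈ ρ r, y j := by
  ext a
  refine Fin.cases ?_ (fun r => ?_) a
  · simp [borderedIncidence, Matrix.mulVec]
  · simp [borderedIncidence, Matrix.mulVec, dotProduct, incidence]

lemma IsGeneric.eq_of_apply_eq {K : Type*} [CommRing K] [IsDomain K] (h : IsGeneric K ρ)
    {y z : Fin (d + 1) → K} (hy : IsNormalTo ρ y) (hz : IsNormalTo ρ z) {i : Fin (d + 1)}
    (hi : y i = z i) : y = z := by
  refine sub_eq_zero.1 (Matrix.eq_zero_of_mulVec_eq_zero (h i) ?_)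
  rw [borderedIncidence_mulVec]
  ext a
  refine Fin.cases ?_ (fun r => ?_) a
  · simpa [sub_eq_zero] using hi
  · simpa using hy.sub hz r

theorem isGeneric_of_linearIndependent {K : Type*} [Field K] {y : Fin (d + 1) → K}
    (hρ : LinearIndependent K fun r => incidence K (ρ r)) (hy : IsNormalTo ρ y)
    (hne : ∀ i, y i ≠ 0) : IsGeneric K ρ := by
  intro i
  have hspan : Submodule.span K (Set.range fun r => incidence K (ρ r)) ≤
      LinearMap.ker (dotProductBilin K K y) := by
    rw [Submodule.span_le]
    rintro _ ⟨r, rfl⟩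
    simpa [dotProduct, incidence] using hy r
  have hrows : LinearIndependent K (borderedIncidence K ρ i).row :=
    linearIndependent_finCons.2 ⟨hρ, fun hi => hne i (by simpa using hspan hi)⟩
  rw [← isUnit_iff_ne_zero, ← Matrix.isUnit_iff_isUnit_det]
  exact Matrix.linearIndependent_rows_iff_isUnit.1 hrows

theorem IsGeneric.exists_normal {K : Type*} [Field K] (h : IsGeneric K ρ) :
    ∃ l : Fin (d + 1) → K, IsNormalTo ρ l ∧ (∀ i, l i ≠ 0) ∧
      ∀ y, IsNormalTo ρ y → ∃ t : K, y = t • l := by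
  have hsurj : Function.Surjective (borderedIncidence K ρ 0).mulVec := by
    rw [Matrix.mulVec_surjective_iff_isUnit, Matrix.isUnit_iff_isUnit_det]
    exact (h 0).isUnit
  obtain ⟨l, hl⟩ := hsurj (Fin.cons 1 0)
  rw [borderedIncidence_mulVec] at hl
  obtain ⟨hl_zero, hl_normal⟩ := Fin.cons_inj.1 hl
  have hl_normal : IsNormalTo ρ l := congrFun hl_normal
  refine ⟨l, hl_normal, fun i hi => ?_, fun y hy => ⟨y 0, ?_⟩⟩
  · have hl_eq : l = 0 := h.eq_of_apply_eq hl_normal (fun r => by simp) hi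
    simp [hl_eq] at hl_zero
  · exact h.eq_of_apply_eq (i := 0) hy (hl_normal.smul _) (by simp [hl_zero])

end GenericRows

section Columns

variable {d : ℕ} {ρ : Fin d → Finset (Fin (d + 1))} {l : Fin (d + 1) → ℝ}

/-- The `i`-th column of the incidence matrix of `ρ`, as a set of players other than `0`: player
`r + 1` stands for row `r`. -/
def column (ρ : Fin d → Finset (Fin (d + 1))) (i : Fin (d + 1)) : Finset (Fin (d + 1)) :=
  ({r | i ∈ ρ r} : Finset (Fin d)).map (Fin.succEmb d)

@[simp] lemma zero_notMem_column (i : Fin (d + 1)) : 0 ∉ column ρ i := by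
  simp [column, Fin.succ_ne_zero]

@[simp] lemma succ_mem_column {i : Fin (d + 1)} {r : Fin d} : r.succ ∈ column ρ i ↔ i ∈ ρ r := by
  simp [column]

lemma column_injective : Function.Injective (column (d := d)) := by
  intro ρ ρ' h
  ext r i
  rw [← succ_mem_column, h, succ_mem_column]

lemma IsGeneric.injective_column {K : Type*} [CommRing K] [IsDomain K] (h : IsGeneric K ρ)
    (hd : 2 ≤ d) : Function.Injective (column ρ) := by
  intro i j hij
  by_contra hne
  obtain ⟨k, hki, hkj⟩ := Fin.exists_ne_and_ne_of_two_lt i j (by omega)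
  have hmem (r : Fin d) : i ∈ ρ r ↔ j ∈ ρ r := by
    rw [← succ_mem_column, hij, succ_mem_column]
  have hnormal : IsNormalTo ρ (Pi.single i 1 - Pi.single j 1 : Fin (d + 1) → K) := fun r => by
    simp [sum_sub_distrib, hmem]
  have hzero := h.eq_of_apply_eq (i := k) (z := 0) hnormal (fun r => by simp) (by simp [hki, hkj])
  simpa [hne] using congrFun hzero i

lemma IsGeneric.column_ne_empty {K : Type*} [CommRing K] [IsDomain K] (h : IsGeneric K ρ)
    (hd : 0 < d) (i : Fin (d + 1)) : column ρ i ≠ ∅ := by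
  intro hempty
  have : Nontrivial (Fin (d + 1)) := Fin.nontrivial_iff_two_le.2 (by omega)
  obtain ⟨k, hk⟩ := exists_ne i
  have hmem (r : Fin d) : i ∉ ρ r := by
    rw [← succ_mem_column, hempty]; exact notMem_empty _
  have hnormal : IsNormalTo ρ (Pi.single i 1 : Fin (d + 1) → K) := fun r => by
    simp [hmem]
  have hzero := h.eq_of_apply_eq (i := k) (z := 0) hnormal (fun r => by simp) (by simp [hk])
  simpa using congrFun hzero i

/-- The `i`-th column, complemented where `l i` is not positive. -/
noncomputable def orientedColumn (ρ : Fin d → Finset (Fin (d + 1))) (l : Fin (d + 1) → ℝ)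
    (i : Fin (d + 1)) : Finset (Fin (d + 1)) :=
  if 0 < l i then column ρ i else (column ρ i)ᶜ

lemma awayFrom_orientedColumn (i : Fin (d + 1)) :
    awayFrom 0 (orientedColumn ρ l i) = column ρ i := by
  unfold orientedColumn
  split_ifs
  · exact awayFrom_of_notMem (zero_notMem_column i)
  · rw [awayFrom_compl, awayFrom_of_notMem (zero_notMem_column i)]

lemma orientedColumn_ne_empty (h : ∀ i, column ρ i ≠ ∅) (i : Fin (d + 1)) :
    orientedColumn ρ l i ≠ ∅ := by
  unfold orientedColumn
  split_ifs
  · exact h i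
  · exact ne_empty_of_mem (mem_compl.2 (zero_notMem_column i))

lemma injective_orientedColumn (h : Function.Injective (column ρ)) :
    Function.Injective (orientedColumn ρ l) := fun i j hij =>
  h (by rw [← awayFrom_orientedColumn (l := l) i, hij, awayFrom_orientedColumn])

lemma sum_filter_mem_orientedColumn (y : Fin (d + 1) → ℝ) (x : Fin (d + 1)) :
    ∑ i with x ∈ orientedColumn ρ l i, y i =
      ∑ i with x ∈ column ρ i, (if 0 < l i then y i else -y i) + ∑ i with ¬ 0 < l i, y i := by
  simp only [sum_filter, ← sum_add_distrib]
  refine sum_congr rfl fun i _ => ?_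
  by_cases hl : 0 < l i <;> by_cases hx : x ∈ column ρ i <;> simp [orientedColumn, hl, hx]

-- Player `0` lies in no column, hence detects the constant; the other players detect the rows.
lemma coversEvenly_image_orientedColumn_iff (h : Function.Injective (orientedColumn ρ l))
    {w : Finset (Fin (d + 1)) → ℝ} :
    CoversEvenly (univ.image (orientedColumn ρ l)) w ↔ IsNormalTo ρ fun i =>
      if 0 < l i then w (orientedColumn ρ l i) else -w (orientedColumn ρ l i) := by
  set y := fun i => w (orientedColumn ρ l i)
  have hsum (x : Fin (d + 1)) : ∑ S ∈ univ.image (orientedColumn ρ l) with x ∈ S, w S =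
      ∑ i with x ∈ column ρ i, (if 0 < l i then y i else -y i) + ∑ i with ¬ 0 < l i, y i := by
    rw [← sum_filter_mem_orientedColumn, filter_image, sum_image h.injOn]
  have hsucc (r : Fin d) : ({i | r.succ ∈ column ρ i} : Finset _) = ρ r := by simp
  simp only [CoversEvenly, hsum, Fin.forall_fin_succ, hsucc, IsNormalTo]
  simp only [zero_notMem_column, filter_false, sum_empty, zero_add, exists_eq_left',
    add_eq_right]
  rfl

theorem IsGeneric.exists_isMinimalBalancedCollection (h : IsGeneric ℝ ρ) (hd : 2 ≤ d) :
    ∃ B : Finset (Finset (Fin (d + 1))), IsMinimalBalancedCollection B ∧ #B = d + 1 ∧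
      B.image (awayFrom 0) = univ.image (column ρ) := by
  obtain ⟨l, hl, hl_ne, hl_unique⟩ := h.exists_normal
  have hinj := injective_orientedColumn (l := l) (h.injective_column hd)
  refine ⟨univ.image (orientedColumn ρ l), ?_, ?_, ?_⟩
  · have hlam (i : Fin (d + 1)) :
        Function.extend (orientedColumn ρ l) (|l ·|) 0 (orientedColumn ρ l i) = |l i| :=
      hinj.extend_apply _ _ i
    refine isMinimalBalancedCollection_of_forall_exists_eq_mul
      (lam := Function.extend (orientedColumn ρ l) (|l ·|) 0) (univ_nonempty.image _) ?_ ?_ ?_ ?_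
    · simpa using orientedColumn_ne_empty (h.column_ne_empty (by omega))
    · simpa [hlam] using hl_ne
    · have hsigned (i : Fin (d + 1)) : (if 0 < l i then |l i| else -|l i|) = l i := by
        split_ifs with hi
        · exact abs_of_pos hi
        · rw [abs_of_nonpos (not_lt.1 hi), neg_neg]
      simpa only [coversEvenly_image_orientedColumn_iff hinj, hlam, hsigned] using hl
    · intro w hw
      obtain ⟨t, ht⟩ := hl_unique _ ((coversEvenly_image_orientedColumn_iff hinj).1 hw)
      refine ⟨t, ?_⟩
      simp only [mem_image, mem_univ, true_and, forall_exists_index, forall_apply_eq_imp_iff, hlam]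
      intro i
      have hti : _ = t * l i := congrFun ht i
      split_ifs at hti with hi
      · rwa [abs_of_pos hi]
      · rw [abs_of_nonpos (not_lt.1 hi), mul_neg, ← hti, neg_neg]
  · rw [card_image_of_injective _ hinj, card_univ, Fintype.card_fin]
  · simp only [image_image, Function.comp_def, awayFrom_orientedColumn]

lemma card_le_factorial_of_image_eq {ι α : Type*} [Fintype ι] [DecidableEq α]
    {F : Finset (ι → α)} {U : Finset α}
    (hF : ∀ f ∈ F, Function.Injective f ∧ univ.image f = U) : #F ≤ (Fintype.card ι)! := by
  rcases F.eq_empty_or_nonempty with rfl | ⟨f₀, hf₀⟩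
  · simp
  have hU : #U = Fintype.card ι := by
    rw [← (hF f₀ hf₀).2, card_image_of_injective _ (hF f₀ hf₀).1, card_univ]
  let toEmbedding (f : F) : ι ↪ U :=
    ⟨fun i => ⟨f.1 i, (hF f f.2).2 ▸ mem_image_of_mem _ (mem_univ i)⟩,
      fun _ _ hij => (hF f f.2).1 (congrArg Subtype.val hij)⟩
  have hinj : Function.Injective toEmbedding := fun f g hfg =>
    Subtype.ext <| funext fun i => congrArg Subtype.val (DFunLike.congr_fun hfg i)
  classical
  calc #F = Fintype.card F := (Fintype.card_coe F).symm
    _ ≤ Fintype.card (ι ↪ U) := Fintype.card_le_of_injective toEmbedding hinj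
    _ = (Fintype.card ι)! := by
      rw [Fintype.card_embedding_eq, Fintype.card_coe, hU, Nat.descFactorial_self]

open scoped Classical in
theorem card_isGeneric_le (hd : 2 ≤ d) :
    #{ρ : Fin d → Finset (Fin (d + 1)) | IsGeneric ℝ ρ} ≤
      (d + 1)! * #{B : Finset (Finset (Fin (d + 1))) |
        IsMinimalBalancedCollection B ∧ #B = d + 1} := by
  set G : Finset (Fin d → Finset (Fin (d + 1))) := {ρ | IsGeneric ℝ ρ}
  have hG {ρ} (hρ : ρ ∈ G) : IsGeneric ℝ ρ := (mem_filter_univ ρ).1 hρ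
  have hfibers : #G ≤ (d + 1)! * #(G.image fun ρ => univ.image (column ρ)) := by
    refine card_le_mul_card_image G _ fun U _ => ?_
    rw [← card_image_of_injective _ column_injective]
    refine (card_le_factorial_of_image_eq (U := U) fun f hf => ?_).trans_eq
      (by rw [Fintype.card_fin])
    obtain ⟨ρ, hρ, rfl⟩ := mem_image.1 hf
    obtain ⟨hρG, hρU⟩ := mem_filter.1 hρ
    exact ⟨(hG hρG).injective_column hd, hρU⟩
  refine hfibers.trans (Nat.mul_le_mul_left _ (le_trans (card_le_card fun U hU => ?_)
    (card_image_le (f := image (awayFrom 0)))))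
  obtain ⟨ρ, hρ, rfl⟩ := mem_image.1 hU
  obtain ⟨B, hB, hcard, himage⟩ := (hG hρ).exists_isMinimalBalancedCollection hd
  exact mem_image.2 ⟨B, (mem_filter_univ B).2 ⟨hB, hcard⟩, himage⟩

end Columns

section IndependentTuples

variable {F ι : Type*} [Field F]

lemma exists_finset_card_le_finrank [Finite ι] (W : Submodule F (ι → F)) :
    ∃ s : Finset ι, #s ≤ Module.finrank F W ∧ ∀ x ∈ W, (∀ i ∈ s, x i = 0) → x = 0 := by
  classical
  have := Fintype.ofFinite ι
  let coord (i : ι) : Module.Dual F W := LinearMap.proj i ∘ₗ W.subtype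
  obtain ⟨κ, a, ha, hspan, hindep⟩ := exists_linearIndependent' F coord
  have : Fintype κ := Fintype.ofInjective a ha
  refine ⟨univ.image a, ?_, fun x hx hzero => funext fun i => ?_⟩
  · rw [card_image_of_injective _ ha, card_univ, ← Subspace.dual_finrank_eq]
    exact hindep.fintype_card_le_finrank
  · have hker : Submodule.span F (Set.range (coord ∘ a)) ≤
        LinearMap.ker (Module.Dual.eval F W ⟨x, hx⟩) := by
      rw [Submodule.span_le]
      rintro _ ⟨k, rfl⟩
      exact hzero (a k) (mem_image_of_mem a (mem_univ k))
    rw [hspan] at hker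
    exact hker (Submodule.subset_span ⟨i, rfl⟩)

variable [DecidableEq ι]

open scoped Classical in
theorem card_incidence_mem_le [Fintype ι] (W : Submodule F (ι → F)) :
    #{S : Finset ι | incidence F S ∈ W} ≤ 2 ^ Module.finrank F W := by
  obtain ⟨s, hs, hW⟩ := exists_finset_card_le_finrank W
  calc #{S : Finset ι | incidence F S ∈ W} ≤ #s.powerset := by
        refine card_le_card_of_injOn (· ∩ s) (fun S _ => mem_powerset.2 inter_subset_right) ?_
        intro S hS T hT hST
        simp only [coe_filter, mem_univ, true_and, Set.mem_ofPred_eq] at hS hT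
        refine incidence_injective F (sub_eq_zero.1 (hW _ (W.sub_mem hS hT) fun i hi => ?_))
        have hiff : i ∈ S ↔ i ∈ T := by simpa [hi] using Finset.ext_iff.1 hST i
        simp [incidence, hiff]
    _ = 2 ^ #s := card_powerset s
    _ ≤ 2 ^ Module.finrank F W := Nat.pow_le_pow_right two_pos hs

open scoped Classical in
/-- The `k`-tuples of sets from `R` whose incidence vectors over `F` are linearly independent. -/
noncomputable def independentTuples (F : Type*) [Field F] (R : Finset (Finset ι)) (k : ℕ) :
    Finset (Fin k → Finset ι) :=
  {ρ ∈ Fintype.piFinset fun _ => R | LinearIndependent F fun r => incidence F (ρ r)}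

lemma mem_independentTuples {R : Finset (Finset ι)} {k : ℕ} {ρ : Fin k → Finset ι} :
    ρ ∈ independentTuples F R k ↔
      (∀ r, ρ r ∈ R) ∧ LinearIndependent F fun r => incidence F (ρ r) := by
  simp [independentTuples]

lemma cons_mem_independentTuples {R : Finset (Finset ι)} {k : ℕ} {ρ : Fin k → Finset ι}
    {S : Finset ι} :
    (Fin.cons S ρ : Fin (k + 1) → Finset ι) ∈ independentTuples F R (k + 1) ↔
      (S ∈ R ∧ incidence F S ∉ Submodule.span F (Set.range fun r => incidence F (ρ r))) ∧
        ρ ∈ independentTuples F R k := by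
  have hcons : (fun r => incidence F ((Fin.cons S ρ : Fin (k + 1) → Finset ι) r)) =
      Fin.cons (incidence F S) fun r => incidence F (ρ r) :=
    Fin.comp_cons (incidence F) S ρ
  rw [mem_independentTuples, mem_independentTuples, hcons, linearIndependent_finCons,
    Fin.forall_fin_succ]
  simp only [Fin.cons_zero, Fin.cons_succ]
  tauto

-- Odlyzko: a subspace of dimension `k` contains at most `2 ^ k` incidence vectors, so every
-- independent `k`-tuple has at least `#R - 2 ^ k` extensions.
lemma mul_card_independentTuples_le [Finite ι] (R : Finset (Finset ι)) (k : ℕ) :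
    (#R - 2 ^ k) * #(independentTuples F R k) ≤ #(independentTuples F R (k + 1)) := by
  classical
  have := Fintype.ofFinite ι
  have htail : ∀ ρ ∈ independentTuples F R (k + 1), Fin.tail ρ ∈ independentTuples F R k :=
    fun ρ hρ => (cons_mem_independentTuples.1 (Fin.cons_self_tail ρ ▸ hρ)).2
  refine mul_card_image_le_card_of_maps_to htail _ fun ρ hρ => ?_
  set W := Submodule.span F (Set.range fun r => incidence F (ρ r))
  have hW : #{S ∈ R | incidence F S ∈ W} ≤ 2 ^ k := calc
    _ ≤ #{S : Finset ι | incidence F S ∈ W} := card_le_card (filter_subset_filter _ (subset_univ R))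
    _ ≤ 2 ^ Module.finrank F W := card_incidence_mem_le W
    _ = 2 ^ k := by
      rw [finrank_span_eq_card (mem_independentTuples.1 hρ).2, Fintype.card_fin]
  calc #R - 2 ^ k ≤ #{S ∈ R | incidence F S ∉ W} := by
        have := card_filter_add_card_filter_not (s := R) (fun S => incidence F S ∈ W)
        omega
    _ = #({S ∈ R | incidence F S ∉ W}.image fun S => (Fin.cons S ρ : Fin (k + 1) → Finset ι)) :=
        (card_image_of_injective _ (Fin.cons_left_injective (α := fun _ => Finset ι) ρ)).symm
    _ ≤ _ := by
        refine card_le_card (image_subset_iff.2 fun S hS => ?_)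
        exact mem_filter.2 ⟨cons_mem_independentTuples.2 ⟨mem_filter.1 hS, hρ⟩,
          Fin.tail_cons (α := fun _ => Finset ι) S ρ⟩

theorem prod_le_card_independentTuples [Finite ι] (R : Finset (Finset ι)) (k : ℕ) :
    ∏ j ∈ range k, (#R - 2 ^ j) ≤ #(independentTuples F R k) := by
  induction k with
  | zero =>
    rw [range_zero, prod_empty, Nat.one_le_iff_ne_zero, ← Nat.pos_iff_ne_zero, card_pos]
    exact ⟨![], mem_independentTuples.2 ⟨fun r => r.elim0, linearIndependent_empty_type⟩⟩
  | succ k ih =>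
    rw [prod_range_succ, mul_comm]
    exact (Nat.mul_le_mul_left _ ih).trans (mul_card_independentTuples_le R k)

end IndependentTuples

section Equidistribution

variable {ι : Type*} {c : ι → ZMod 3}

-- For `x = c i ≠ 0` the residues `r`, `r - x` and `r + x` are all of `ZMod 3`.
lemma card_powerset_insert_add_card_powerset [DecidableEq ι] {s : Finset ι} {i : ι}
    (hi : i ∉ s) (hc : c i ≠ 0) (r : ZMod 3) :
    #{S ∈ (insert i s).powerset | ∑ j ∈ S, c j = r} + #{S ∈ s.powerset | ∑ j ∈ S, c j = r + c i} =
      2 ^ #s := by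
  have hresidues : ∀ x y : ZMod 3, x ≠ 0 → ((if y = r then 1 else 0) +
      (if x + y = r then 1 else 0) + if y = r + x then 1 else 0) = 1 := by
    revert r; decide
  simp only [card_filter, sum_powerset_insert hi, ← sum_add_distrib]
  rw [← card_powerset, card_eq_sum_ones]
  refine sum_congr rfl fun S hS => ?_
  rw [sum_insert fun hiS => hi (mem_powerset.1 hS hiS)]
  exact hresidues _ _ hc

theorem abs_three_mul_card_sub_two_pow_le (s : Finset ι) (hc : ∀ i ∈ s, c i ≠ 0) (r : ZMod 3) :
    |(3 * #{S ∈ s.powerset | ∑ j ∈ S, c j = r} - 2 ^ #s : ℤ)| ≤ 2 := by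
  classical
  induction s using Finset.induction_on generalizing r with
  | empty => by_cases hr : 0 = r <;> simp [filter_singleton, hr]
  | insert i s hi ih =>
    have hrec := card_powerset_insert_add_card_powerset hi (hc i (mem_insert_self i s)) r
    have hs := ih (fun j hj => hc j (mem_insert_of_mem hj)) (r + c i)
    rw [card_insert_of_notMem hi, pow_succ]
    zify at hrec
    rw [abs_le] at hs ⊢
    constructor <;> linarith

end Equidistribution

section CountingGenericRows

lemma two_pow_le_three_mul_card_add_two {ι : Type*} [Fintype ι] {c : ι → ZMod 3}
    (hc : ∀ i, c i ≠ 0) :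
    2 ^ Fintype.card ι ≤ 3 * #{S : Finset ι | ∑ j ∈ S, c j = 0} + 2 := by
  have h := (abs_le.1 (abs_three_mul_card_sub_two_pow_le univ (fun i _ => hc i) 0)).1
  rw [powerset_univ, card_univ] at h
  zify
  linarith

variable {a d k : ℕ}

lemma cast_sub_le_cast_tsub (a b : ℕ) : (a : ℝ) - b ≤ (a - b : ℕ) := by
  rw [sub_le_iff_le_add]
  exact_mod_cast le_tsub_add

lemma three_fifths_mul_two_pow_le (ha : 2 ^ (d + 1) ≤ 3 * a + 2) (hk : k + 5 ≤ d) :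
    (3 / 5 : ℝ) * 2 ^ d ≤ (a - 2 ^ k : ℕ) := by
  have ha' : (2 : ℝ) * 2 ^ d ≤ 3 * a + 2 := by rw [← pow_succ']; exact_mod_cast ha
  have hd : (2 : ℝ) ^ 5 ≤ 2 ^ d := pow_le_pow_right₀ one_le_two (by omega)
  have hkd : (2 : ℝ) ^ k * 2 ^ 5 ≤ 2 ^ d := by
    rw [← pow_add]; exact pow_le_pow_right₀ one_le_two hk
  have hsub := cast_sub_le_cast_tsub a (2 ^ k)
  push_cast at hsub
  linarith

lemma two_pow_div_eight_le (ha : 2 ^ (d + 1) ≤ 3 * a + 2) (hd : 5 ≤ d) (hk : k < d) :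
    (2 : ℝ) ^ d / 8 ≤ (a - 2 ^ k : ℕ) := by
  have ha' : (2 : ℝ) * 2 ^ d ≤ 3 * a + 2 := by rw [← pow_succ']; exact_mod_cast ha
  have hd' : (2 : ℝ) ^ 5 ≤ 2 ^ d := pow_le_pow_right₀ one_le_two hd
  have hkd : (2 : ℝ) ^ k * 2 ≤ 2 ^ d := by
    rw [← pow_succ]; exact pow_le_pow_right₀ one_le_two hk
  have hsub := cast_sub_le_cast_tsub a (2 ^ k)
  push_cast at hsub
  linarith

lemma le_prod_sub_two_pow (ha : 2 ^ (d + 1) ≤ 3 * a + 2) (hd : 5 ≤ d) :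
    (2 : ℝ) ^ (d * d) * (3 / 5) ^ d / 4096 ≤ (∏ k ∈ range d, (a - 2 ^ k) : ℕ) := by
  obtain ⟨e, rfl⟩ := Nat.exists_eq_add_of_le' (show 4 ≤ d by omega)
  rw [prod_range_add]
  push_cast
  calc (2 : ℝ) ^ ((e + 4) * (e + 4)) * (3 / 5) ^ (e + 4) / 4096
      ≤ (2 : ℝ) ^ ((e + 4) * (e + 4)) * (3 / 5) ^ e / 4096 := by
        gcongr ?_ * ?_ / _
        exact pow_le_pow_of_le_one (by norm_num) (by norm_num) (by omega)
    _ = (3 / 5 * 2 ^ (e + 4)) ^ e * (2 ^ (e + 4) / 8) ^ 4 := by rw [pow_mul, mul_pow]; ring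
    _ = (∏ _k ∈ range e, (3 / 5 * 2 ^ (e + 4))) * ∏ _k ∈ range 4, (2 ^ (e + 4) / 8) := by
        simp only [prod_const, card_range]
    _ ≤ _ := by
        gcongr with k hk k hk
        · exact three_fifths_mul_two_pow_le ha (by have := mem_range.1 hk; omega)
        · exact two_pow_div_eight_le ha hd (by have := mem_range.1 hk; omega)

/-- The vector over `ZMod 3` with first coordinate `1` and the other coordinates `±1` given by
`σ`. -/
def signVector (σ : Fin d → (ZMod 3)ˣ) : Fin (d + 1) → ZMod 3 :=
  Fin.cons 1 fun r => σ r

lemma signVector_ne_zero (σ : Fin d → (ZMod 3)ˣ) (i : Fin (d + 1)) : signVector σ i ≠ 0 := by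
  refine Fin.cases ?_ (fun r => ?_) i
  · simp [signVector]
  · simp [signVector]

lemma signVector_injective : Function.Injective (signVector (d := d)) := by
  intro σ τ h
  ext r
  exact congrFun (Fin.cons_inj.1 h).2 r

/-- The `d`-tuples of sets whose incidence vectors are linearly independent over `ZMod 3` and
orthogonal to `signVector σ`. -/
noncomputable def signedTuples (σ : Fin d → (ZMod 3)ˣ) : Finset (Fin d → Finset (Fin (d + 1))) :=
  independentTuples (ZMod 3) {S | ∑ i ∈ S, signVector σ i = 0} d

lemma isNormalTo_of_mem_signedTuples {σ : Fin d → (ZMod 3)ˣ} {ρ : Fin d → Finset (Fin (d + 1))}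
    (hρ : ρ ∈ signedTuples σ) : IsNormalTo ρ (signVector σ) := fun r =>
  (mem_filter_univ (ρ r)).1 ((mem_independentTuples.1 hρ).1 r)

lemma isGeneric_of_mem_signedTuples {σ : Fin d → (ZMod 3)ˣ} {ρ : Fin d → Finset (Fin (d + 1))}
    (hρ : ρ ∈ signedTuples σ) : IsGeneric (ZMod 3) ρ :=
  isGeneric_of_linearIndependent (mem_independentTuples.1 hρ).2
    (isNormalTo_of_mem_signedTuples hρ) (signVector_ne_zero σ)

lemma pairwiseDisjoint_signedTuples :
    (Set.univ : Set (Fin d → (ZMod 3)ˣ)).PairwiseDisjoint signedTuples := by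
  refine fun σ _ τ _ hne => disjoint_left.2 fun ρ hσ hτ => hne (signVector_injective ?_)
  exact (isGeneric_of_mem_signedTuples hσ).eq_of_apply_eq (i := 0)
    (isNormalTo_of_mem_signedTuples hσ) (isNormalTo_of_mem_signedTuples hτ) rfl

lemma le_card_signedTuples (hd : 5 ≤ d) (σ : Fin d → (ZMod 3)ˣ) :
    (2 : ℝ) ^ (d * d) * (3 / 5) ^ d / 4096 ≤ #(signedTuples σ) := by
  have hcard := two_pow_le_three_mul_card_add_two (signVector_ne_zero σ)
  rw [Fintype.card_fin] at hcard
  exact (le_prod_sub_two_pow hcard hd).trans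
    (Nat.cast_le.2 (prod_le_card_independentTuples _ d))

open scoped Classical in
theorem le_card_isGeneric (hd : 5 ≤ d) :
    (2 : ℝ) ^ (d * d) * (6 / 5) ^ d / 4096 ≤
      #{ρ : Fin d → Finset (Fin (d + 1)) | IsGeneric ℝ ρ} := by
  have hsub : univ.biUnion (signedTuples (d := d)) ⊆
      ({ρ | IsGeneric ℝ ρ} : Finset (Fin d → Finset (Fin (d + 1)))) := by
    intro ρ hρ
    obtain ⟨σ, -, hσ⟩ := mem_biUnion.1 hρ
    exact (mem_filter_univ ρ).2 ((isGeneric_of_mem_signedTuples hσ).of_charZero ℝ)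
  calc (2 : ℝ) ^ (d * d) * (6 / 5) ^ d / 4096
      = ∑ _σ : Fin d → (ZMod 3)ˣ, (2 : ℝ) ^ (d * d) * (3 / 5) ^ d / 4096 := by
        rw [sum_const, card_univ, Fintype.card_fun, ZMod.card_units, Fintype.card_fin,
          show (6 / 5 : ℝ) = 2 * (3 / 5) by norm_num, mul_pow]
        simp only [nsmul_eq_mul]
        push_cast
        ring
    _ ≤ ∑ σ : Fin d → (ZMod 3)ˣ, (#(signedTuples σ) : ℝ) :=
        sum_le_sum fun σ _ => le_card_signedTuples hd σ
    _ = #(univ.biUnion (signedTuples (d := d))) := by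
        rw [card_biUnion (by simpa using pairwiseDisjoint_signedTuples), Nat.cast_sum]
    _ ≤ _ := Nat.cast_le.2 (card_le_card hsub)

end CountingGenericRows

section Proportion

lemma Bnn_le_Btot (n : ℕ) : Bnn n ≤ Btot n :=
  Nat.card_le_card_of_injective (fun B => ⟨B.1, B.2.1, B.2.2.1⟩) fun _ _ h =>
    Subtype.ext (congrArg Subtype.val h :)

open scoped Classical in
lemma Bnn_succ {d : ℕ} (hd : 0 < d) :
    Bnn (d + 1) =
      #{B : Finset (Finset (Fin (d + 1))) | IsMinimalBalancedCollection B ∧ #B = d + 1} := by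
  rw [Bnn, Nat.card_eq_fintype_card, Fintype.card_subtype]
  congr! 3 with B
  refine and_iff_right_of_imp fun hcard hB => ?_
  rw [hB, card_singleton] at hcard
  omega

open scoped Classical in
lemma Btot_succ_le (d : ℕ) :
    Btot (d + 1) ≤ Bnn (d + 1) +
      #{B : Finset (Finset (Fin (d + 1))) | IsMinimalBalancedCollection B ∧ #B ≤ d} := by
  rw [Btot, Bnn, Nat.card_eq_fintype_card, Nat.card_eq_fintype_card, Fintype.card_subtype,
    Fintype.card_subtype]
  refine (card_le_card fun B hB => ?_).trans (card_union_le _ _)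
  simp only [mem_filter, mem_univ, true_and, mem_union] at hB ⊢
  have := hB.1.card_le
  by_cases hcard : #B = d + 1
  · exact .inl ⟨hB.1, hB.2, hcard⟩
  · exact .inr ⟨hB.1, by omega⟩

lemma two_pow_le_mul_Bnn {d : ℕ} (hd : 5 ≤ d) :
    (2 : ℝ) ^ (d * d) ≤ 4096 * (5 / 6) ^ d * ((d + 1) * d ! * Bnn (d + 1)) := by
  classical
  have hlower : (2 : ℝ) ^ (d * d) * (6 / 5) ^ d / 4096 ≤ (d + 1)! * Bnn (d + 1) := by
    rw [Bnn_succ (by omega)]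
    exact (le_card_isGeneric hd).trans (by exact_mod_cast card_isGeneric_le (by omega))
  have hpow : (6 / 5 : ℝ) ^ d * (5 / 6) ^ d = 1 := by rw [← mul_pow]; norm_num
  calc (2 : ℝ) ^ (d * d) = 2 ^ (d * d) * ((6 / 5) ^ d * (5 / 6) ^ d) := by rw [hpow, mul_one]
    _ = 4096 * (5 / 6) ^ d * (2 ^ (d * d) * (6 / 5) ^ d / 4096) := by ring
    _ ≤ 4096 * (5 / 6) ^ d * ((d + 1)! * Bnn (d + 1)) := by gcongr
    _ = _ := by rw [Nat.factorial_succ]; push_cast; rfl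

lemma Btot_sub_Bnn_mul_factorial_le (d : ℕ) :
    ((Btot (d + 1) : ℝ) - Bnn (d + 1)) * d ! ≤ 2 * ((d + 1) * 2 ^ (d * d)) := by
  classical
  have hsmall : (Btot (d + 1) : ℝ) - Bnn (d + 1) ≤
      #{B : Finset (Finset (Fin (d + 1))) | IsMinimalBalancedCollection B ∧ #B ≤ d} :=
    sub_le_iff_le_add'.2 (by exact_mod_cast Btot_succ_le d)
  refine (mul_le_mul_of_nonneg_right hsmall (Nat.cast_nonneg _)).trans ?_
  exact_mod_cast card_isMinimalBalancedCollection_card_le_mul_factorial d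

theorem Btot_sub_Bnn_div_le {d : ℕ} (hd : 5 ≤ d) :
    ((Btot (d + 1) : ℝ) - Bnn (d + 1)) / Btot (d + 1) ≤ 8192 * ((d + 1) ^ 2 * (5 / 6) ^ d) := by
  have hle : (Bnn (d + 1) : ℝ) ≤ Btot (d + 1) := Nat.cast_le.2 (Bnn_le_Btot _)
  refine div_le_of_le_mul₀ (Nat.cast_nonneg _) (by positivity) ?_
  refine le_of_mul_le_mul_right ?_ (Nat.cast_pos.2 d.factorial_pos)
  calc ((Btot (d + 1) : ℝ) - Bnn (d + 1)) * d ! ≤ 2 * ((d + 1) * 2 ^ (d * d)) :=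
        Btot_sub_Bnn_mul_factorial_le d
    _ ≤ 2 * ((d + 1) * (4096 * (5 / 6) ^ d * ((d + 1) * d ! * Btot (d + 1)))) := by
        grw [two_pow_le_mul_Bnn hd, hle]
    _ = 8192 * ((d + 1) ^ 2 * (5 / 6) ^ d) * Btot (d + 1) * d ! := by ring

lemma tendsto_sq_mul_five_sixths_pow :
    Filter.Tendsto (fun d : ℕ => 8192 * (((d : ℝ) + 1) ^ 2 * (5 / 6) ^ d)) Filter.atTop
      (nhds 0) := by
  have hlim := tendsto_pow_const_mul_const_pow_of_abs_lt_one 2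
    (show |(5 / 6 : ℝ)| < 1 by rw [abs_of_pos] <;> norm_num)
  have hshift := ((Filter.tendsto_add_atTop_iff_nat 1).2 hlim).const_mul (8192 * (6 / 5))
  rw [mul_zero] at hshift
  refine hshift.congr fun d => ?_
  push_cast
  ring

end Proportion

/-- Corollary (Corollary `cor2`): the proportion
`φ_n = (B_n − B_n^n)/B_n` of minimal balanced collections of cardinality strictly
less than `n` (equivalently, of facets of the polyhedron of balanced games
containing games with a non-singleton core) tends to `0` as `n → ∞`. -/
theorem phi_tendsto_zero :
    Filter.Tendsto
      (fun n : ℕ => ((Btot n : ℝ) - (Bnn n : ℝ)) / (Btot n : ℝ))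
      Filter.atTop (nhds 0) := by
  rw [← Filter.tendsto_add_atTop_iff_nat 1]
  refine squeeze_zero' (.of_forall fun d => ?_) ?_ tendsto_sq_mul_five_sixths_pow
  · exact div_nonneg (sub_nonneg.2 (Nat.cast_le.2 (Bnn_le_Btot (d + 1)))) (Nat.cast_nonneg _)
  · filter_upwards [Filter.eventually_ge_atTop 5] with d hd using Btot_sub_Bnn_div_le hd
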